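/- arXiv:2108.02534 — 2 statements merged into one kernel-verified Lean document; each statement's English description precedes it below -/
import Mathlib

section
/- Let m, n, r be positive integers with r < m, let C and D be (m+n)×(m+n) real symmetric matrices, and fix an orthogonal matrix U ∈ O(r+1) whose last column is the normalized all-ones vector in ℝ^{r+1}. For each (r+1)×(r+1) permutation matrix P, the matrix Uᵀ P U has block form P̂ ⊕ 1 for an r×r matrix P̂ (the standard representation image of P). Then E_{P}[ χ( C + (P̂ ⊕ I_{m+n−r}) D (P̂ ⊕ I_{m+n−r})ᵀ ) ] = E_{Q}[ χ( C + (Q ⊕ I_{m+n−r}) D (Q ⊕ I_{m+n−r})ᵀ ) ], where the left expectation is over P uniform among the (r+1)! permutation matrices and the right expectation is over Q Haar-distributed on the orthogonal group O(r). -/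
open Polynomial Matrix MeasureTheory

noncomputable instance matMeasurableSpace (m n : ℕ) :
    MeasurableSpace (Matrix (Fin m) (Fin n) ℝ) :=
  MeasurableSpace.pi

/-- The permutation matrix of a permutation. -/
def permMat {N : ℕ} (σ : Equiv.Perm (Fin N)) : Matrix (Fin N) (Fin N) ℝ :=
  Matrix.of fun i j => if σ j = i then (1 : ℝ) else 0

/-- `X ⊕ Y` : block-diagonal `diag(X, Y)`. -/
def blkDiag {m n : ℕ} (P : Matrix (Fin m) (Fin m) ℝ) (S : Matrix (Fin n) (Fin n) ℝ) :
    Matrix (Fin m ⊕ Fin n) (Fin m ⊕ Fin n) ℝ :=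
  Matrix.fromBlocks P 0 0 S

/-- A probability measure on `s × s` real matrices is the *Haar distribution on `O(s)`* iff
it is supported on orthogonal matrices and invariant under left translation by every
orthogonal matrix (this characterizes the Haar probability measure of the compact group
`O(s)`). -/
def IsHaarOrthogonal {s : ℕ} (μ : Measure (Matrix (Fin s) (Fin s) ℝ)) : Prop :=
  IsProbabilityMeasure μ ∧
  (∀ᵐ Q ∂μ, Qᵀ * Q = 1) ∧
  ∀ U : Matrix (Fin s) (Fin s) ℝ, Uᵀ * U = 1 → μ.map (fun Q => U * Q) = μ

theorem det_add_vecMulVec_adjugate {ν : Type*} [Fintype ν] [DecidableEq ν]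
    (A : Matrix ν ν ℝ) (u v : ν → ℝ) :
    (A + vecMulVec u v).det = A.det + v ⬝ᵥ A.adjugate *ᵥ u := by
  have hunit : ∀ B : Matrix ν ν ℝ, B.det ≠ 0 →
      (B + vecMulVec u v).det = B.det + v ⬝ᵥ B.adjugate *ᵥ u := by
    intro B hB
    have h := det_add_replicateCol_mul_replicateRow (ι := Unit) (isUnit_iff_ne_zero.mpr hB) u v
    rw [← vecMulVec_eq] at h
    rw [h, det_unique (1 + _), Matrix.add_apply, Matrix.one_apply_eq, mul_add, mul_one]
    congr 1
    have : (replicateRow Unit v * B⁻¹ * replicateCol Unit u) default default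
        = v ⬝ᵥ B⁻¹ *ᵥ u := by
      rw [Matrix.mul_assoc]; rfl
    rw [this, Matrix.inv_def, Ring.inverse_eq_inv', smul_mulVec, dotProduct_smul, smul_eq_mul,
      mul_inv_cancel_left₀ hB]
  have hdense : Dense {t : ℝ | (-A).charpoly.IsRoot t}ᶜ :=
    Set.Countable.dense_compl ℝ
      (Polynomial.finite_setOfPred_isRoot (charpoly_monic (-A)).ne_zero).to_countable
  have hext := Continuous.ext_on hdense
    (f := fun t : ℝ => (A + t • (1 : Matrix ν ν ℝ) + vecMulVec u v).det)
    (g := fun t : ℝ => (A + t • (1 : Matrix ν ν ℝ)).det +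
      v ⬝ᵥ (A + t • (1 : Matrix ν ν ℝ)).adjugate *ᵥ u)
    (by fun_prop) (by fun_prop) (by
      intro t ht
      apply hunit
      intro h
      apply ht
      change (-A).charpoly.eval t = 0
      rw [eval_charpoly, ← h, sub_neg_eq_add, add_comm, scalar_apply, smul_one_eq_diagonal])
  simpa using congrFun hext 0

theorem orthogonal_matrix_induction {s : ℕ} {p : Matrix (Fin s) (Fin s) ℝ → Prop}
    (one : p 1) (mul : ∀ A B, p A → p B → p (A * B))
    (refl : ∀ w : Fin s → ℝ, w ⬝ᵥ w = 1 → p (1 - (2 : ℝ) • vecMulVec w w))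
    (Q : Matrix (Fin s) (Fin s) ℝ) (hQ : Qᵀ * Q = 1) : p Q := by
  have hrefl : ∀ v : EuclideanSpace ℝ (Fin s), ∃ M, p M ∧
      ∀ x, ((ℝ ∙ v)ᗮ.reflection x).ofLp = M *ᵥ x.ofLp := by
    intro v
    rcases eq_or_ne v 0 with rfl | hv
    · refine ⟨1, one, fun x => ?_⟩
      rw [Submodule.reflection_orthogonal_apply, Submodule.reflection_singleton_apply]
      simp
    · have hn : ‖v‖ ≠ 0 := norm_ne_zero_iff.mpr hv
      have hvv : v.ofLp ⬝ᵥ v.ofLp = ‖v‖ ^ 2 := by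
        rw [EuclideanSpace.real_norm_sq_eq]
        simp [dotProduct, sq]
      refine ⟨_, refl (‖v‖⁻¹ • v.ofLp) ?_, fun x => ?_⟩
      · rw [smul_dotProduct, dotProduct_smul, hvv]
        simp only [smul_eq_mul]
        field_simp
      · have hin : inner ℝ v x = v.ofLp ⬝ᵥ x.ofLp := by
          simp [PiLp.inner_apply, dotProduct, mul_comm]
        rw [Submodule.reflection_orthogonal_apply, Submodule.reflection_singleton_apply, hin]
        ext i
        simp [sub_mulVec, smul_mulVec, vecMulVec_mulVec, smul_vecMulVec, vecMulVec_smul]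
        field_simp
  have key : ∀ l : List (EuclideanSpace ℝ (Fin s)), ∃ M, p M ∧
      ∀ x, ((l.map fun v => (ℝ ∙ v)ᗮ.reflection).prod x).ofLp = M *ᵥ x.ofLp := by
    intro l
    induction l with
    | nil => exact ⟨1, one, fun x => by simp⟩
    | cons v l ih =>
      obtain ⟨M, hM, hMx⟩ := ih
      obtain ⟨R, hR, hRx⟩ := hrefl v
      refine ⟨R * M, mul R M hR hM, fun x => ?_⟩
      rw [List.map_cons, List.prod_cons, LinearIsometryEquiv.coe_mul, Function.comp_apply, hRx, hMx, mulVec_mulVec]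
  have hnorm : ∀ x, ‖toEuclideanLin Q x‖ = ‖x‖ := by
    intro x
    have h : ‖toEuclideanLin Q x‖ ^ 2 = ‖x‖ ^ 2 := by
      rw [← real_inner_self_eq_norm_sq, ← real_inner_self_eq_norm_sq,
        EuclideanSpace.inner_eq_star_dotProduct, EuclideanSpace.inner_eq_star_dotProduct,
        ofLp_toLpLin]
      simp only [star_trivial, toLin'_apply]
      rw [dotProduct_mulVec, ← mulVec_transpose, mulVec_mulVec, hQ, one_mulVec]
    exact (sq_eq_sq₀ (norm_nonneg _) (norm_nonneg _)).mp h
  let f : EuclideanSpace ℝ (Fin s) →ₗᵢ[ℝ] EuclideanSpace ℝ (Fin s) := ⟨toEuclideanLin Q, hnorm⟩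
  obtain ⟨l, -, hl⟩ := (f.toLinearIsometryEquiv rfl).reflections_generate_dim
  obtain ⟨M, hM, hMx⟩ := key l
  have : Q = M := by
    apply ext_of_mulVec_single
    intro i
    rw [← WithLp.ofLp_toLp 2 (Pi.single i 1), ← hMx, ← hl]
    rfl
  exact this ▸ hM

theorem det_sub_conj_left {ν : Type*} [Fintype ν] [DecidableEq ν] (A B E : Matrix ν ν ℝ)
    (c : ℝ) (w : ν → ℝ) :
    (A - B * ((1 - c • vecMulVec w w) * E) * Bᵀ).det = (A - B * E * Bᵀ).det +
      c * (w ⬝ᵥ (E * (Bᵀ * (A - B * E * Bᵀ).adjugate * B)) *ᵥ w) := by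
  have h : A - B * ((1 - c • vecMulVec w w) * E) * Bᵀ =
      (A - B * E * Bᵀ) + vecMulVec (c • B *ᵥ w) (w ᵥ* (E * Bᵀ)) := by
    rw [smul_vecMulVec, ← vecMulVec_mul, ← mul_vecMulVec]
    simp only [Matrix.sub_mul, Matrix.mul_sub, Matrix.one_mul, Matrix.mul_smul, Matrix.smul_mul,
      Matrix.mul_assoc]
    abel
  rw [h, det_add_vecMulVec_adjugate, mulVec_smul, dotProduct_smul, ← dotProduct_mulVec,
    mulVec_mulVec, mulVec_mulVec, smul_eq_mul]
  simp only [Matrix.mul_assoc]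

theorem det_sub_conj_right {ν : Type*} [Fintype ν] [DecidableEq ν] (A B E : Matrix ν ν ℝ)
    (c : ℝ) (w : ν → ℝ) :
    (A - B * (E * (1 - c • vecMulVec w w)) * Bᵀ).det = (A - B * E * Bᵀ).det +
      c * (w ⬝ᵥ (Bᵀ * (A - B * E * Bᵀ).adjugate * B * E) *ᵥ w) := by
  have h : A - B * (E * (1 - c • vecMulVec w w)) * Bᵀ =
      (A - B * E * Bᵀ) + vecMulVec (c • (B * E) *ᵥ w) (w ᵥ* Bᵀ) := by
    rw [smul_vecMulVec, ← vecMulVec_mul, ← mul_vecMulVec]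
    simp only [Matrix.sub_mul, Matrix.mul_sub, Matrix.mul_one, Matrix.mul_smul, Matrix.smul_mul,
      Matrix.mul_assoc]
    abel
  rw [h, det_add_vecMulVec_adjugate, mulVec_smul, dotProduct_smul, ← dotProduct_mulVec,
    mulVec_mulVec, mulVec_mulVec, smul_eq_mul]
  simp only [Matrix.mul_assoc]

/-- The defect of an averaged determinant from commuting with `1 - c w wᵀ` is a quadratic form
in `w`. -/
theorem exists_sum_det_conj_commutator {ι ν : Type*} [Fintype ι] [Fintype ν] [DecidableEq ν]
    (A E : Matrix ν ν ℝ) (B : ι → Matrix ν ν ℝ) :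
    ∃ K : Matrix ν ν ℝ, ∀ (c : ℝ) (w : ν → ℝ),
      ∑ σ, (A - B σ * ((1 - c • vecMulVec w w) * E) * (B σ)ᵀ).det =
        ∑ σ, (A - B σ * (E * (1 - c • vecMulVec w w)) * (B σ)ᵀ).det + c * (w ⬝ᵥ K *ᵥ w) := by
  refine ⟨∑ σ, (E * ((B σ)ᵀ * (A - B σ * E * (B σ)ᵀ).adjugate * B σ) -
    (B σ)ᵀ * (A - B σ * E * (B σ)ᵀ).adjugate * B σ * E), fun c w => ?_⟩
  rw [sum_mulVec, dotProduct_sum, Finset.mul_sum, ← Finset.sum_add_distrib]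
  refine Finset.sum_congr rfl fun σ _ => ?_
  rw [det_sub_conj_left, det_sub_conj_right, sub_mulVec, dotProduct_sub]
  ring

theorem blkDiag_one_mul {r k : ℕ} (P Q : Matrix (Fin r) (Fin r) ℝ) :
    blkDiag (P * Q) (1 : Matrix (Fin k) (Fin k) ℝ) = blkDiag P 1 * blkDiag Q 1 := by
  simp [blkDiag, fromBlocks_multiply]

theorem blkDiag_one_transpose {r k : ℕ} (P : Matrix (Fin r) (Fin r) ℝ) :
    (blkDiag P (1 : Matrix (Fin k) (Fin k) ℝ))ᵀ = blkDiag Pᵀ 1 := by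
  simp [blkDiag, fromBlocks_transpose]

theorem blkDiag_one_one {r k : ℕ} :
    blkDiag (1 : Matrix (Fin r) (Fin r) ℝ) (1 : Matrix (Fin k) (Fin k) ℝ) = 1 :=
  fromBlocks_one

theorem blkDiag_one_sub_smul_vecMulVec {r k : ℕ} (c : ℝ) (w : Fin r → ℝ) :
    blkDiag (1 - c • vecMulVec w w) (1 : Matrix (Fin k) (Fin k) ℝ) =
      1 - c • vecMulVec (Sum.elim w 0) (Sum.elim w 0) := by
  ext (i | i) (j | j) <;> simp [blkDiag, vecMulVec_apply, Matrix.one_apply]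

theorem sumElim_zero_dotProduct_mulVec {r k : ℕ}
    (K : Matrix (Fin r ⊕ Fin k) (Fin r ⊕ Fin k) ℝ) (w : Fin r → ℝ) :
    Sum.elim w 0 ⬝ᵥ K *ᵥ Sum.elim w 0 = w ⬝ᵥ K.toBlocks₁₁ *ᵥ w := by
  simp [dotProduct, mulVec, Fintype.sum_sum_type, toBlocks₁₁]

theorem permMat_one {N : ℕ} : permMat (1 : Equiv.Perm (Fin N)) = 1 := by
  ext i j
  simp [permMat, Matrix.one_apply, eq_comm]

theorem permMat_mul {N : ℕ} (σ τ : Equiv.Perm (Fin N)) :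
    permMat (σ * τ) = permMat σ * permMat τ := by
  ext i j
  simp only [permMat, Matrix.mul_apply, of_apply, Equiv.Perm.mul_apply]
  rw [Finset.sum_eq_single (τ j)] <;> grind

theorem permMat_transpose {N : ℕ} (σ : Equiv.Perm (Fin N)) : (permMat σ)ᵀ = permMat σ⁻¹ := by
  ext i j
  simp only [permMat, transpose_apply, of_apply, Equiv.Perm.inv_eq_iff_eq]
  grind

theorem permMat_swap {N : ℕ} (a b : Fin N) :
    permMat (Equiv.swap a b) =
      1 - vecMulVec (Pi.single a 1 - Pi.single b 1) (Pi.single a 1 - Pi.single b 1) := by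
  ext i j
  simp only [permMat, of_apply, Matrix.sub_apply, Matrix.one_apply, vecMulVec_apply,
    Pi.sub_apply, Pi.single_apply, Equiv.swap_apply_def]
  split_ifs <;> grind

theorem ones_mul_permMat {N : ℕ} (σ : Equiv.Perm (Fin N)) :
    (of fun _ _ => 1 : Matrix (Fin N) (Fin N) ℝ) * permMat σ = of fun _ _ => 1 := by
  ext i j
  simp [permMat, Matrix.mul_apply]

/-- A frame of the hyperplane `∑ xᵢ = 0` compresses permutation matrices multiplicatively. -/
theorem compress_permMat_mul {N r : ℕ} {V : Matrix (Fin N) (Fin r) ℝ} {c : ℝ}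
    (hsum : ∀ j, ∑ i, V i j = 0) (hVV : V * Vᵀ = 1 - c • of fun _ _ => 1)
    (σ τ : Equiv.Perm (Fin N)) :
    Vᵀ * permMat (σ * τ) * V = (Vᵀ * permMat σ * V) * (Vᵀ * permMat τ * V) := by
  have hones : (of fun _ _ => 1 : Matrix (Fin N) (Fin N) ℝ) * V = 0 := by
    ext i j
    simp [Matrix.mul_apply, hsum]
  have h : (V * Vᵀ) * (permMat τ * V) = permMat τ * V := by
    rw [hVV, Matrix.sub_mul, Matrix.one_mul, Matrix.smul_mul, ← Matrix.mul_assoc,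
      ones_mul_permMat, hones, smul_zero, sub_zero]
  calc Vᵀ * permMat (σ * τ) * V = Vᵀ * permMat σ * (permMat τ * V) := by
        rw [permMat_mul]; simp only [Matrix.mul_assoc]
    _ = _ := by
        rw [← h]; simp only [Matrix.mul_assoc]

/-- The squares of the roots `eₐ - e_b` span the quadratic forms on the hyperplane `∑ xᵢ = 0`. -/
theorem quadraticForm_eq_zero_of_roots {N r : ℕ} {V : Matrix (Fin N) (Fin r) ℝ}
    (hV : Vᵀ * V = 1) (hsum : ∀ j, ∑ i, V i j = 0) (L : Matrix (Fin r) (Fin r) ℝ)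
    (hL : ∀ a b : Fin N, (Vᵀ *ᵥ (Pi.single a 1 - Pi.single b 1)) ⬝ᵥ
      L *ᵥ (Vᵀ *ᵥ (Pi.single a 1 - Pi.single b 1)) = 0) (w : Fin r → ℝ) :
    w ⬝ᵥ L *ᵥ w = 0 := by
  set M := V * L * Vᵀ with hM
  have hroot : ∀ a b, M a a - M a b - M b a + M b b = 0 := by
    intro a b
    have h := hL a b
    rw [mulVec_transpose, ← dotProduct_mulVec, ← mulVec_transpose, mulVec_mulVec, mulVec_mulVec,
      ← hM] at h
    simp only [mulVec_sub, mulVec_single_one, sub_dotProduct, dotProduct_sub,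
      single_one_dotProduct, col_apply] at h
    linarith
  have hrow : ∀ a, ∑ b, M a b = 0 := by
    intro a
    simp only [hM, Matrix.mul_apply (M := V * L), transpose_apply]
    rw [Finset.sum_comm]
    simp [← Finset.mul_sum, hsum]
  have hcol : ∀ b, ∑ a, M a b = 0 := by
    intro b
    simp only [hM, Matrix.mul_assoc, Matrix.mul_apply (M := V)]
    rw [Finset.sum_comm]
    simp [← Finset.sum_mul, hsum]
  have hdiag : ∀ a, (N : ℝ) * M a a + M.trace = 0 := by
    intro a
    have h : ∑ b, (M a a - M a b - M b a + M b b) = 0 := by simp [hroot]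
    simp only [Finset.sum_add_distrib, Finset.sum_sub_distrib, hrow, hcol] at h
    simpa [trace] using h
  have hskew : Mᵀ = -M := by
    ext a b
    have hN : (0 : ℝ) < N := by exact_mod_cast a.pos
    have htr : ∑ a, ((N : ℝ) * M a a + M.trace) = 0 := by simp [hdiag]
    rw [Finset.sum_add_distrib, ← Finset.mul_sum] at htr
    have htr' : M.trace = 0 := by
      have : (N : ℝ) * M.trace + N * M.trace = 0 := by simpa [trace] using htr
      nlinarith
    have hd : ∀ a, M a a = 0 := by
      intro a
      have := hdiag a
      rw [htr', add_zero] at this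
      exact (mul_eq_zero.mp this).resolve_left hN.ne'
    have := hroot a b
    rw [hd, hd] at this
    simp only [transpose_apply, Matrix.neg_apply]
    linarith
  have hLM : L = Vᵀ * M * V := by
    calc L = (Vᵀ * V) * L * (Vᵀ * V) := by rw [hV, Matrix.one_mul, Matrix.mul_one]
      _ = _ := by rw [hM]; simp only [Matrix.mul_assoc]
  have hLskew : Lᵀ = -L := by
    rw [hLM]
    simp [Matrix.transpose_mul, hskew, Matrix.mul_assoc]
  have h : w ⬝ᵥ L *ᵥ w = -(w ⬝ᵥ L *ᵥ w) := by
    conv_lhs => rw [dotProduct_mulVec, ← mulVec_transpose, hLskew, neg_mulVec, neg_dotProduct,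
      dotProduct_comm]
  linarith

theorem vecMulVec_reflection_mul_self {ν : Type*} [Fintype ν] [DecidableEq ν] {w : ν → ℝ}
    (hw : w ⬝ᵥ w = 1) :
    (1 - (2 : ℝ) • vecMulVec w w) * (1 - (2 : ℝ) • vecMulVec w w) = 1 := by
  have h : vecMulVec w w * vecMulVec w w = vecMulVec w w := by
    rw [vecMulVec_mul_vecMulVec, hw, one_smul]
  simp only [Matrix.sub_mul, Matrix.mul_sub, Matrix.one_mul, Matrix.mul_one, Matrix.smul_mul,
    Matrix.mul_smul, h]
  module

/-- Averaging a conjugated determinant over the compressed permutation matrices produces a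
function invariant under conjugation by the whole orthogonal group. -/
theorem sum_det_conj_orthogonal_invariant {N r k : ℕ} {V : Matrix (Fin N) (Fin r) ℝ} {c : ℝ}
    (hV : Vᵀ * V = 1) (hsum : ∀ j, ∑ i, V i j = 0) (hVV : V * Vᵀ = 1 - c • of fun _ _ => 1)
    (A : Matrix (Fin r ⊕ Fin k) (Fin r ⊕ Fin k) ℝ)
    (Q : Matrix (Fin r) (Fin r) ℝ) (hQ : Qᵀ * Q = 1)
    (E : Matrix (Fin r ⊕ Fin k) (Fin r ⊕ Fin k) ℝ) :
    ∑ σ : Equiv.Perm (Fin N), (A - blkDiag (Vᵀ * permMat σ * V) 1 *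
        (blkDiag Q 1 * E * (blkDiag Q 1)ᵀ) * (blkDiag (Vᵀ * permMat σ * V) 1)ᵀ).det =
      ∑ σ : Equiv.Perm (Fin N), (A - blkDiag (Vᵀ * permMat σ * V) 1 * E *
        (blkDiag (Vᵀ * permMat σ * V) 1)ᵀ).det := by
  set P : Equiv.Perm (Fin N) → Matrix (Fin r) (Fin r) ℝ := fun σ => Vᵀ * permMat σ * V with hP
  set B : Equiv.Perm (Fin N) → Matrix (Fin r ⊕ Fin k) (Fin r ⊕ Fin k) ℝ :=
    fun σ => blkDiag (P σ) 1 with hB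
  have hBmul : ∀ σ τ, B (σ * τ) = B σ * B τ := fun σ τ => by
    simp only [hB, hP, compress_permMat_mul hsum hVV, blkDiag_one_mul]
  have hBone : B 1 = 1 := by
    simp only [hB, hP, permMat_one, Matrix.mul_one, hV, blkDiag_one_one]
  have hperm : ∀ τ E, ∑ σ, (A - B σ * (B τ * E * (B τ)ᵀ) * (B σ)ᵀ).det =
      ∑ σ, (A - B σ * E * (B σ)ᵀ).det := by
    intro τ E
    rw [← Equiv.sum_comp (Equiv.mulRight τ) fun σ => (A - B σ * E * (B σ)ᵀ).det]
    refine Finset.sum_congr rfl fun σ _ => ?_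
    simp only [Equiv.coe_mulRight, hBmul, Matrix.transpose_mul, Matrix.mul_assoc]
  have hswap : ∀ a b, B (Equiv.swap a b) = 1 - (1 : ℝ) • vecMulVec
      (Sum.elim (Vᵀ *ᵥ (Pi.single a 1 - Pi.single b 1)) 0)
      (Sum.elim (Vᵀ *ᵥ (Pi.single a 1 - Pi.single b 1)) 0) := by
    intro a b
    rw [← blkDiag_one_sub_smul_vecMulVec]
    simp only [hB, hP, permMat_swap]
    rw [Matrix.mul_sub, Matrix.sub_mul, Matrix.mul_one, hV, mul_vecMulVec, vecMulVec_mul,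
      ← mulVec_transpose, one_smul]
  have hcomm : ∀ (w : Fin r → ℝ) E,
      ∑ σ, (A - B σ * (blkDiag (1 - (2 : ℝ) • vecMulVec w w) 1 * E) * (B σ)ᵀ).det =
      ∑ σ, (A - B σ * (E * blkDiag (1 - (2 : ℝ) • vecMulVec w w) 1) * (B σ)ᵀ).det := by
    intro w E
    obtain ⟨K, hK⟩ := exists_sum_det_conj_commutator A E B
    have hform := quadraticForm_eq_zero_of_roots hV hsum K.toBlocks₁₁ (fun a b => by
      have h := hK 1 (Sum.elim (Vᵀ *ᵥ (Pi.single a 1 - Pi.single b 1)) 0)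
      have hR : B (Equiv.swap a b) * B (Equiv.swap a b) = 1 := by
        rw [← hBmul, Equiv.swap_mul_self, hBone]
      have hRt : (B (Equiv.swap a b))ᵀ = B (Equiv.swap a b) := by
        simp [hswap, transpose_vecMulVec]
      have hinv := hperm (Equiv.swap a b) (E * B (Equiv.swap a b))
      rw [hRt, Matrix.mul_assoc, Matrix.mul_assoc, hR, Matrix.mul_one] at hinv
      rw [← hswap, hinv, sumElim_zero_dotProduct_mulVec] at h
      linarith) w
    rw [blkDiag_one_sub_smul_vecMulVec, hK, sumElim_zero_dotProduct_mulVec, hform, mul_zero,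
      add_zero]
  revert E
  refine orthogonal_matrix_induction (p := fun Q => ∀ E,
    ∑ σ, (A - B σ * (blkDiag Q 1 * E * (blkDiag Q 1)ᵀ) * (B σ)ᵀ).det =
      ∑ σ, (A - B σ * E * (B σ)ᵀ).det) ?_ ?_ ?_ Q hQ
  · intro E
    simp [blkDiag_one_one]
  · intro Q R hQ hR E
    rw [← hR E, ← hQ (blkDiag R 1 * E * (blkDiag R 1)ᵀ)]
    simp only [blkDiag_one_mul, Matrix.transpose_mul, Matrix.mul_assoc]
  · intro w hw E
    rw [Matrix.mul_assoc, hcomm, Matrix.mul_assoc, blkDiag_one_transpose, ← blkDiag_one_mul]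
    simp only [transpose_sub, transpose_one, transpose_smul, transpose_vecMulVec]
    rw [vecMulVec_reflection_mul_self hw, blkDiag_one_one, Matrix.mul_one]

theorem continuous_charpoly_coeff {ν : Type*} [Fintype ν] [DecidableEq ν] (t : ℕ) :
    Continuous fun M : Matrix ν ν ℝ => M.charpoly.coeff t := by
  have h : (fun M : Matrix ν ν ℝ => M.charpoly.coeff t) = fun M : Matrix ν ν ℝ =>
      MvPolynomial.eval (fun p : ν × ν => M p.1 p.2) ((charpoly.univ ℝ ν).coeff t) := by
    funext M
    exact (charpoly.univ_coeff_eval₂Hom (R := ℝ) ν (RingHom.id ℝ) (fun p => M p.1 p.2) t).symm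
  rw [h]
  exact (MvPolynomial.continuous_eval _).comp (by fun_prop)

instance (s : ℕ) : BorelSpace (Matrix (Fin s) (Fin s) ℝ) :=
  inferInstanceAs (BorelSpace (Fin s → Fin s → ℝ))

theorem IsHaarOrthogonal.integrable_of_continuous {s : ℕ} {μ : Measure (Matrix (Fin s) (Fin s) ℝ)}
    (hμ : IsHaarOrthogonal μ) {g : Matrix (Fin s) (Fin s) ℝ → ℝ} (hg : Continuous g) :
    Integrable g μ := by
  obtain ⟨_, horth, -⟩ := hμ
  have hcompact : IsCompact (Set.univ.pi fun _ => Set.univ.pi fun _ => Set.Icc (-1) 1 :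
      Set (Fin s → Fin s → ℝ)) :=
    isCompact_univ_pi fun _ => isCompact_univ_pi fun _ => isCompact_Icc
  obtain ⟨b, hb⟩ := hcompact.exists_bound_of_continuousOn (f := g) hg.continuousOn
  refine Integrable.of_bound hg.aestronglyMeasurable b ?_
  filter_upwards [horth] with Q hQ
  refine hb Q fun i _ j _ => ?_
  have h : ∑ l, Q l j * Q l j = 1 := by
    simpa [Matrix.mul_apply] using congrFun (congrFun hQ j) j
  have hle := Finset.single_le_sum (f := fun l => Q l j * Q l j)
    (fun l _ => mul_self_nonneg _) (Finset.mem_univ i)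
  exact abs_le.mp (abs_le_one_iff_mul_self_le_one.mpr (h ▸ hle))

/-- **Permutation quadrature equals orthogonal quadrature** (extension of
MSS Corollary 4.12 / Cohen's lemma).  For `(m+n) × (m+n)` symmetric matrices `C, D`,
`r < m`, an orthogonal `U ∈ O(r+1)` whose last column is the normalized all-ones vector,
and `P̂` the top-left `r × r` block of `Uᵀ P U` (so that `Uᵀ P U = P̂ ⊕ 1`):
`E_{P uniform permutation}[χ(C + (P̂ ⊕ I)·D·(P̂ ⊕ I)ᵀ)]
  = E_{Q Haar on O(r)}[χ(C + (Q ⊕ I)·D·(Q ⊕ I)ᵀ)]` (coefficientwise). -/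
theorem perm_quadrature_eq_orthogonal_quadrature
    (m n r : ℕ) (hm : 0 < m) (hn : 0 < n) (hr : r < m)
    (C D : Matrix (Fin r ⊕ Fin (m + n - r)) (Fin r ⊕ Fin (m + n - r)) ℝ)
    (hC : C.IsSymm) (hD : D.IsSymm)
    (U : Matrix (Fin (r + 1)) (Fin (r + 1)) ℝ)
    (hU : Uᵀ * U = 1)
    (hUones : ∀ i : Fin (r + 1), U i (Fin.last r) = (Real.sqrt (r + 1))⁻¹)
    (μ : Measure (Matrix (Fin r) (Fin r) ℝ)) (hμ : IsHaarOrthogonal μ) :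
    let Phat : Equiv.Perm (Fin (r + 1)) → Matrix (Fin r) (Fin r) ℝ :=
      fun σ => Matrix.of fun i j => (Uᵀ * permMat σ * U) (Fin.castSucc i) (Fin.castSucc j)
    ∀ t : ℕ,
      (((r + 1).factorial : ℝ))⁻¹ *
        ∑ σ : Equiv.Perm (Fin (r + 1)),
          (Matrix.charpoly
            (C + blkDiag (Phat σ) (1 : Matrix (Fin (m + n - r)) (Fin (m + n - r)) ℝ) * D *
              (blkDiag (Phat σ) (1 : Matrix (Fin (m + n - r)) (Fin (m + n - r)) ℝ))ᵀ)).coeff t =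
      ∫ Q, (Matrix.charpoly
          (C + blkDiag Q (1 : Matrix (Fin (m + n - r)) (Fin (m + n - r)) ℝ) * D *
            (blkDiag Q (1 : Matrix (Fin (m + n - r)) (Fin (m + n - r)) ℝ))ᵀ)).coeff t ∂μ := by
  intro Phat t
  set V : Matrix (Fin (r + 1)) (Fin r) ℝ := U.submatrix id Fin.castSucc with hVdef
  have hPhat : ∀ σ, Phat σ = Vᵀ * permMat σ * V := by
    intro σ
    ext i j
    simp [Phat, V, Matrix.mul_apply]
  have hpos : (0 : ℝ) < r + 1 := by positivity
  have hV : Vᵀ * V = 1 := by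
    ext i j
    have h := congrFun (congrFun hU i.castSucc) j.castSucc
    simpa [Matrix.mul_apply, V, Matrix.one_apply] using h
  have hsum : ∀ j, ∑ i, V i j = 0 := by
    intro j
    have h := congrFun (congrFun hU (Fin.last r)) j.castSucc
    simp only [Matrix.mul_apply, transpose_apply, hUones, ← Finset.mul_sum] at h
    rw [Matrix.one_apply_ne (Fin.castSucc_lt_last j).ne'] at h
    exact (mul_eq_zero.mp h).resolve_left (inv_ne_zero (Real.sqrt_pos.mpr hpos).ne')
  have hVV : V * Vᵀ = 1 - ((Real.sqrt (r + 1))⁻¹ * (Real.sqrt (r + 1))⁻¹) • of fun _ _ => 1 := by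
    have hU' : U * Uᵀ = 1 := mul_eq_one_comm.mp hU
    ext i j
    have h := congrFun (congrFun hU' i) j
    rw [Matrix.mul_apply, Fin.sum_univ_castSucc] at h
    simp only [transpose_apply, hUones] at h
    simp only [Matrix.mul_apply, Matrix.sub_apply, Matrix.smul_apply, of_apply, transpose_apply,
      smul_eq_mul, mul_one, ← h, hVdef, submatrix_apply, id]
    ring
  have horth : ∀ σ, (Phat σ)ᵀ * Phat σ = 1 := by
    intro σ
    have h : (Phat σ)ᵀ = Vᵀ * permMat σ⁻¹ * V := by
      rw [hPhat, ← permMat_transpose]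
      simp [Matrix.mul_assoc]
    rw [h, hPhat, ← compress_permMat_mul hsum hVV, inv_mul_cancel, permMat_one, Matrix.mul_one, hV]
  set g : Matrix (Fin r) (Fin r) ℝ → ℝ := fun Q =>
    (C + blkDiag Q 1 * D * (blkDiag Q 1)ᵀ).charpoly.coeff t
  have hgcont : Continuous g := by
    refine (continuous_charpoly_coeff t).comp ?_
    have : Continuous fun Q : Matrix (Fin r) (Fin r) ℝ =>
        blkDiag Q (1 : Matrix (Fin (m + n - r)) (Fin (m + n - r)) ℝ) :=
      continuous_id.matrix_fromBlocks continuous_const continuous_const continuous_const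
    fun_prop
  have hinv : ∀ Q, Qᵀ * Q = 1 → ∑ σ, g (Phat σ * Q) = ∑ σ, g (Phat σ) := by
    intro Q hQ
    have hpoly : ∑ σ, (C + blkDiag (Phat σ * Q) 1 * D * (blkDiag (Phat σ * Q) 1)ᵀ).charpoly =
        ∑ σ, (C + blkDiag (Phat σ) 1 * D * (blkDiag (Phat σ) 1)ᵀ).charpoly := by
      refine Polynomial.funext fun x => ?_
      have h := sum_det_conj_orthogonal_invariant hV hsum hVV
        (scalar (Fin r ⊕ Fin (m + n - r)) x - C) Q hQ D
      simp only [← hPhat] at h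
      simp only [eval_finsetSum, eval_charpoly, ← sub_sub]
      rw [← h]
      simp only [blkDiag_one_mul, Matrix.transpose_mul, Matrix.mul_assoc]
    simpa only [finsetSum_coeff] using congrArg (fun q => q.coeff t) hpoly
  have hprob := hμ.1
  have hint : ∀ σ, ∫ Q, g (Phat σ * Q) ∂μ = ∫ Q, g Q ∂μ := by
    intro σ
    have hmul : Continuous fun Q : Matrix (Fin r) (Fin r) ℝ => Phat σ * Q := by fun_prop
    conv_rhs => rw [← hμ.2.2 (Phat σ) (horth σ)]
    rw [integral_map hmul.aemeasurable hgcont.aestronglyMeasurable]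
  have htotal : ∑ σ, g (Phat σ) = ((r + 1).factorial : ℝ) * ∫ Q, g Q ∂μ := by
    calc ∑ σ, g (Phat σ) = ∫ Q, ∑ σ, g (Phat σ) ∂μ := by simp
      _ = ∫ Q, ∑ σ, g (Phat σ * Q) ∂μ := by
        refine integral_congr_ae ?_
        filter_upwards [hμ.2.1] with Q hQ using (hinv Q hQ).symm
      _ = ∑ σ, ∫ Q, g (Phat σ * Q) ∂μ :=
        integral_finsetSum _ fun σ _ => hμ.integrable_of_continuous (hgcont.comp (by fun_prop))
      _ = _ := by
        simp only [hint, Finset.sum_const, Finset.card_univ, Fintype.card_perm, Fintype.card_fin,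
          nsmul_eq_mul]
  change _ * ∑ σ, g (Phat σ) = ∫ Q, g Q ∂μ
  rw [htotal, inv_mul_cancel_left₀ (by positivity)]
end

section
/- Fix integers c, d ≥ 2 and a real number θ, and let G₁, G₂, … be a sequence of (c,d)-biregular bipartite graphs whose numbers of vertices tend to infinity. If the second largest eigenvalue of the adjacency matrix of Gᵢ is at most θ for every i, then θ ≥ √(c−1) + √(d−1). -/
open Polynomial Matrix Filter

/-- The `j`-th largest root (counted with multiplicity, `j = 1` being the largest)
of a real polynomial. -/
noncomputable def nthLargestRoot (p : Polynomial ℝ) (j : ℕ) : ℝ :=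
  (p.roots.sort (· ≤ ·)).getD (Multiset.card p.roots - j) 0

/-- The `j`-th largest eigenvalue of a (symmetric) real matrix, as the `j`-th largest
root of its characteristic polynomial `det(x·I − M)`. -/
noncomputable def nthLargestEig {N : Type*} [Fintype N] [DecidableEq N]
    (M : Matrix N N ℝ) (j : ℕ) : ℝ :=
  nthLargestRoot M.charpoly j

/-- The matrix `S (r p)ᵏ r Sᵀ`. When `S` is the vertex–edge incidence matrix of one side of a
bipartite graph and `p`, `r` record pairs of distinct edges sharing an endpoint on that side,
resp. on the other side, it counts the nonbacktracking walks of length `2 (k + 1)`. -/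
noncomputable def nbWalk {V E : Type*} [Fintype E] [DecidableEq E]
    (S : Matrix V E ℝ) (p r : Matrix E E ℝ) (k : ℕ) : Matrix V V ℝ :=
  S * (r * p) ^ k * r * Sᵀ

lemma mul_entry_nonneg {X Y Z : Type*} [Fintype Y] {M : Matrix X Y ℝ} {N : Matrix Y Z ℝ}
    (hM : ∀ i j, 0 ≤ M i j) (hN : ∀ i j, 0 ≤ N i j) (i : X) (j : Z) : 0 ≤ (M * N) i j := by
  rw [Matrix.mul_apply]
  exact Finset.sum_nonneg fun l _ => mul_nonneg (hM i l) (hN l j)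

lemma pow_entry_nonneg {X : Type*} [Fintype X] [DecidableEq X] {M : Matrix X X ℝ}
    (hM : ∀ i j, 0 ≤ M i j) (k : ℕ) : ∀ i j, 0 ≤ (M ^ k) i j := by
  induction k with
  | zero => intro i j; rw [pow_zero, Matrix.one_apply]; positivity
  | succ k ih => rw [pow_succ]; exact mul_entry_nonneg ih hM

section nbWalk
variable {V E : Type*} [Fintype V] [Fintype E] [DecidableEq E]
  {S : Matrix V E ℝ} {p r : Matrix E E ℝ} {c d : ℝ}

lemma mul_nbWalk_zero [DecidableEq V] (hr2 : r * r = (d - 2) • r + (d - 1) • 1) (hSS : S * Sᵀ = c • 1)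
    (hSp : S * p = (c - 1) • S) (hP : Sᵀ * S = 1 + p) :
    (S * (1 + r) * Sᵀ) * nbWalk S p r 0
      = nbWalk S p r 1 + (c + d - 2) • nbWalk S p r 0 + (c * (d - 1)) • 1 := by
  have h : (S * (1 + r) * Sᵀ) * nbWalk S p r 0
      = S * r * Sᵀ + S * p * (r * Sᵀ) + S * (r * r) * Sᵀ + S * (r * p) * r * Sᵀ := by
    simp only [nbWalk, pow_zero, Matrix.mul_one]
    calc _ = S * (1 + r) * (Sᵀ * S) * r * Sᵀ := by simp only [Matrix.mul_assoc]
      _ = _ := by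
        rw [hP]
        simp only [Matrix.mul_add, Matrix.add_mul, Matrix.mul_assoc, Matrix.mul_one]
        abel
  rw [h, hSp, hr2]
  simp only [nbWalk, pow_zero, pow_one, Matrix.mul_one, Matrix.mul_add, Matrix.add_mul,
    Matrix.smul_mul, Matrix.mul_smul, hSS, ← Matrix.mul_assoc]
  module

lemma mul_nbWalk_succ (hr2 : r * r = (d - 2) • r + (d - 1) • 1)
    (hSp : S * p = (c - 1) • S) (hP : Sᵀ * S = 1 + p) (k : ℕ) :
    (S * (1 + r) * Sᵀ) * nbWalk S p r (k + 1)
      = nbWalk S p r (k + 2) + (c + d - 2) • nbWalk S p r (k + 1)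
        + ((c - 1) * (d - 1)) • nbWalk S p r k := by
  have h : (S * (1 + r) * Sᵀ) * nbWalk S p r (k + 1)
      = S * (r * p) ^ (k + 1) * r * Sᵀ + S * p * (r * p) ^ (k + 1) * r * Sᵀ
        + S * (r * r) * p * (r * p) ^ k * r * Sᵀ
        + S * (r * p) * (r * p) ^ (k + 1) * r * Sᵀ := by
    simp only [nbWalk]
    calc _ = S * (1 + r) * (Sᵀ * S) * (r * p) ^ (k + 1) * r * Sᵀ := by
          simp only [Matrix.mul_assoc]
      _ = S * (r * p) ^ (k + 1) * r * Sᵀ + S * p * (r * p) ^ (k + 1) * r * Sᵀ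
        + S * r * (r * p) ^ (k + 1) * r * Sᵀ
        + S * (r * p) * (r * p) ^ (k + 1) * r * Sᵀ := by
        rw [hP]
        simp only [Matrix.mul_add, Matrix.add_mul, Matrix.mul_assoc, Matrix.mul_one]
        abel
      _ = _ := by
        congr 2
        rw [pow_succ']
        simp only [Matrix.mul_assoc]
  have h2 : nbWalk S p r (k + 2) = S * (r * p) * (r * p) ^ (k + 1) * r * Sᵀ := by
    rw [nbWalk, pow_succ' _ (k + 1)]
    simp only [Matrix.mul_assoc]
  have h1 : nbWalk S p r (k + 1) = S * r * p * (r * p) ^ k * r * Sᵀ := by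
    rw [nbWalk, pow_succ']
    simp only [Matrix.mul_assoc]
  rw [h, h2, ← nbWalk, h1, hSp, hr2]
  have h3 : S * (r * p) ^ (k + 1) * r * Sᵀ = S * r * p * (r * p) ^ k * r * Sᵀ := h1
  simp only [Matrix.mul_add, Matrix.add_mul, Matrix.smul_mul, Matrix.mul_smul, h3, Matrix.mul_one,
    hSp]
  simp only [nbWalk]
  module

end nbWalk

/-- The nonbacktracking walk matrices of a biregular bipartite graph are nonnegative and satisfy
a three-term recurrence with respect to `A Aᵀ`. -/
lemma exists_nbWalks {V U : Type*} [Fintype V] [Fintype U] [DecidableEq V] [DecidableEq U]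
    {A : Matrix V U ℝ} {c d : ℝ} (h01 : ∀ a b, A a b = 0 ∨ A a b = 1)
    (hrow : ∀ a, ∑ b, A a b = c) (hcol : ∀ b, ∑ a, A a b = d) :
    ∃ F : ℕ → Matrix V V ℝ, (∀ k a b, 0 ≤ F k a b) ∧ A * Aᵀ = F 0 + c • 1 ∧
      (A * Aᵀ) * F 0 = F 1 + (c + d - 2) • F 0 + (c * (d - 1)) • 1 ∧
      ∀ k, (A * Aᵀ) * F (k + 1)
        = F (k + 2) + (c + d - 2) • F (k + 1) + ((c - 1) * (d - 1)) • F k := by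
  classical
  have hsum : ∀ f : V × U → ℝ, ∑ e : {e : V × U // A e.1 e.2 = 1}, f e.1
      = ∑ a, ∑ b, A a b * f (a, b) := by
    intro f
    rw [← Finset.sum_subtype (Finset.univ.filter fun e : V × U => A e.1 e.2 = 1) (by simp) f,
      Finset.sum_filter, Fintype.sum_prod_type]
    refine Finset.sum_congr rfl fun a _ => Finset.sum_congr rfl fun b _ => ?_
    rcases h01 a b with h | h <;> simp [h]
  obtain ⟨S, hS⟩ : ∃ S : Matrix V {e : V × U // A e.1 e.2 = 1} ℝ,
    ∀ a e, S a e = if e.1.1 = a then 1 else 0 :=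
    ⟨fun a e => if e.1.1 = a then 1 else 0, fun _ _ => rfl⟩
  obtain ⟨T, hT⟩ : ∃ T : Matrix U {e : V × U // A e.1 e.2 = 1} ℝ,
    ∀ b e, T b e = if e.1.2 = b then 1 else 0 :=
    ⟨fun b e => if e.1.2 = b then 1 else 0, fun _ _ => rfl⟩
  have hST : S * Tᵀ = A := by
    ext a b
    simp only [Matrix.mul_apply, Matrix.transpose_apply, hS, hT]
    rw [hsum fun e => (if e.1 = a then 1 else 0) * (if e.2 = b then 1 else 0)]
    simp
  have hSS : S * Sᵀ = c • 1 := by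
    ext a a'
    simp only [Matrix.mul_apply, Matrix.transpose_apply, hS]
    rw [hsum fun e => (if e.1 = a then 1 else 0) * (if e.1 = a' then 1 else 0)]
    simp [hrow, Matrix.one_apply, eq_comm]
  have hTT : T * Tᵀ = d • 1 := by
    ext b b'
    simp only [Matrix.mul_apply, Matrix.transpose_apply, hT]
    rw [hsum fun e => (if e.2 = b then 1 else 0) * (if e.2 = b' then 1 else 0), Finset.sum_comm]
    simp [hcol, Matrix.one_apply, eq_comm]
  obtain ⟨p, hp⟩ : ∃ p, p = Sᵀ * S - 1 := ⟨_, rfl⟩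
  obtain ⟨r, hr⟩ : ∃ r, r = Tᵀ * T - 1 := ⟨_, rfl⟩
  have hSnn : ∀ a e, 0 ≤ S a e := fun a e => by rw [hS]; positivity
  have hpnn : ∀ e f, 0 ≤ p e f := by
    intro e f
    simp only [hp, Matrix.sub_apply, Matrix.mul_apply, Matrix.one_apply, hS, Matrix.transpose_apply]
    by_cases h : e = f
    · subst h; simp
    · simp only [h, if_false, sub_zero]; positivity
  have hrnn : ∀ e f, 0 ≤ r e f := by
    intro e f
    simp only [hr, Matrix.sub_apply, Matrix.mul_apply, Matrix.one_apply, hT, Matrix.transpose_apply]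
    by_cases h : e = f
    · subst h; simp
    · simp only [h, if_false, sub_zero]; positivity
  have hP : Sᵀ * S = 1 + p := by rw [hp]; abel
  have hR : Tᵀ * T = 1 + r := by rw [hr]; abel
  have hSp : S * p = (c - 1) • S := by
    rw [hp, Matrix.mul_sub, ← Matrix.mul_assoc, hSS, Matrix.smul_mul, Matrix.one_mul,
      Matrix.mul_one, sub_smul, one_smul]
  have hr2 : r * r = (d - 2) • r + (d - 1) • 1 := by
    have h : (Tᵀ * T) * (Tᵀ * T) = d • (Tᵀ * T) := by
      rw [Matrix.mul_assoc, ← Matrix.mul_assoc T, hTT]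
      simp
    rw [hr]
    simp only [Matrix.mul_sub, Matrix.sub_mul, h, Matrix.mul_one, Matrix.one_mul]
    module
  have hM : A * Aᵀ = S * (1 + r) * Sᵀ := by
    have h := congrArg (fun B => B * Bᵀ) hST
    simp only [Matrix.transpose_mul, Matrix.transpose_transpose] at h
    rw [← h, ← hR]
    simp only [Matrix.mul_assoc]
  refine ⟨nbWalk S p r, fun k => ?_, ?_, ?_, fun k => ?_⟩
  · exact mul_entry_nonneg (mul_entry_nonneg (mul_entry_nonneg hSnn
      (pow_entry_nonneg (mul_entry_nonneg hrnn hpnn) k)) hrnn) fun e a => hSnn a e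
  · rw [hM, Matrix.mul_add, Matrix.add_mul, Matrix.mul_one, hSS, nbWalk, pow_zero, Matrix.mul_one,
      add_comm]
  · rw [hM]; exact mul_nbWalk_zero hr2 hSS hSp hP
  · rw [hM]; exact mul_nbWalk_succ hr2 hSp hP k

lemma countP_le_one_of_nthLargestRoot_two_le {p : Polynomial ℝ} {θ : ℝ}
    (h : nthLargestRoot p 2 ≤ θ) : p.roots.countP (θ < ·) ≤ 1 := by
  have hlen : (p.roots.sort (· ≤ ·)).length = Multiset.card p.roots := Multiset.length_sort _
  have hsort : (p.roots.sort (· ≤ ·)).Pairwise (· ≤ ·) := Multiset.pairwise_sort _ _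
  rw [← Multiset.sort_eq p.roots (· ≤ ·), Multiset.coe_countP]
  unfold nthLargestRoot at h
  rw [← hlen] at h
  generalize p.roots.sort (· ≤ ·) = L at *
  rw [← List.take_append_drop (L.length - 1) L, List.countP_append]
  have h1 : (L.take (L.length - 1)).countP (θ < ·) = 0 := by
    rw [List.countP_eq_zero]
    intro x hx
    obtain ⟨i, hi, rfl⟩ := List.mem_take_iff_getElem.1 hx
    have hi' : i ≤ L.length - 2 := by omega
    have hl : L.length - 2 < L.length := by omega
    rw [List.getD_eq_getElem _ _ hl] at h
    have := hsort.sortedLE.getElem_le_getElem_of_le (hi := by omega) (hj := hl) hi'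
    simp only [decide_eq_true_eq, not_lt]
    exact this.trans h
  have h2 := (L.drop (L.length - 1)).countP_le_length (p := (θ < ·))
  rw [List.length_drop] at h2
  omega

/-- On the orthogonal complement of a suitable vector, the quadratic form of a symmetric matrix is
bounded by its second largest eigenvalue. -/
lemma exists_forall_dotProduct_mulVec_le {N : Type*} [Fintype N] [DecidableEq N]
    {M : Matrix N N ℝ} (hM : M.IsHermitian) {θ : ℝ} (h : nthLargestEig M 2 ≤ θ) :
    ∃ v : N → ℝ, ∀ x, v ⬝ᵥ x = 0 → x ⬝ᵥ M *ᵥ x ≤ θ * (x ⬝ᵥ x) := by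
  have hcount := countP_le_one_of_nthLargestRoot_two_le h
  rw [hM.roots_charpoly_eq_eigenvalues, Multiset.countP_map] at hcount
  have hone : ∀ i j, θ < hM.eigenvalues i → θ < hM.eigenvalues j → i = j := by
    have : (Finset.univ.filter fun i => θ < hM.eigenvalues i).card ≤ 1 := hcount
    intro i j hi hj
    exact Finset.card_le_one.1 this i (by simpa) j (by simpa)
  obtain ⟨v, hv⟩ : ∃ v : N → ℝ, ∀ i, θ < hM.eigenvalues i →
      v = (hM.eigenvectorUnitary : Matrix N N ℝ).col i := by
    by_cases hex : ∃ i, θ < hM.eigenvalues i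
    · obtain ⟨i, hi⟩ := hex
      exact ⟨(hM.eigenvectorUnitary : Matrix N N ℝ).col i, fun j hj => by
        rw [hone i j hi hj]⟩
    · exact ⟨0, fun i hi => (hex ⟨i, hi⟩).elim⟩
  refine ⟨v, fun x hx => ?_⟩
  set U : Matrix N N ℝ := (hM.eigenvectorUnitary : Matrix N N ℝ) with hU
  have hUU : U * Uᵀ = 1 := by
    have := Unitary.mul_star_self_of_mem hM.eigenvectorUnitary.2
    simpa [Matrix.star_eq_conjTranspose] using this
  have hspec : M = U * diagonal hM.eigenvalues * Uᵀ := by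
    have := hM.spectral_theorem
    rw [Unitary.conjStarAlgAut_apply] at this
    simpa [Matrix.star_eq_conjTranspose] using this
  have hq : x ⬝ᵥ M *ᵥ x = ∑ i, hM.eigenvalues i * (Uᵀ *ᵥ x) i ^ 2 := by
    conv_lhs => rw [hspec]
    rw [← Matrix.mulVec_mulVec, ← Matrix.mulVec_mulVec, Matrix.dotProduct_mulVec,
      ← Matrix.mulVec_transpose, dotProduct]
    refine Finset.sum_congr rfl fun i _ => ?_
    rw [Matrix.mulVec_diagonal]; ring
  have hn : x ⬝ᵥ x = ∑ i, (Uᵀ *ᵥ x) i ^ 2 := by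
    conv_lhs => rhs; rw [← Matrix.one_mulVec x, ← hUU]
    rw [← Matrix.mulVec_mulVec, Matrix.dotProduct_mulVec, ← Matrix.mulVec_transpose, dotProduct]
    exact Finset.sum_congr rfl fun i _ => (sq _).symm
  rw [hq, hn, Finset.mul_sum]
  refine Finset.sum_le_sum fun i _ => ?_
  by_cases hi : θ < hM.eigenvalues i
  · have h0 : (Uᵀ *ᵥ x) i = 0 := by
      rw [← hx, hv i hi]; rfl
    simp [h0]
  · exact mul_le_mul_of_nonneg_right (not_lt.1 hi) (sq_nonneg _)

lemma dotProduct_mul_transpose_mulVec_le {V U : Type*} [Fintype V] [Fintype U] [DecidableEq V]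
    [DecidableEq U] {A : Matrix V U ℝ} {c d θ : ℝ} (hc : 0 < c) (hd : 0 < d)
    (hrow : ∀ a, ∑ b, A a b = c) (hcol : ∀ b, ∑ a, A a b = d)
    (hθ : nthLargestEig (Matrix.fromBlocks 0 A Aᵀ 0) 2 ≤ θ) (hlt : θ < √c * √d)
    {f : V → ℝ} (hf : ∑ a, f a = 0) :
    f ⬝ᵥ (A * Aᵀ) *ᵥ f ≤ max θ 0 ^ 2 * (f ⬝ᵥ f) := by
  have hherm : (Matrix.fromBlocks 0 A Aᵀ 0).IsHermitian := by
    rw [Matrix.IsHermitian, Matrix.fromBlocks_conjTranspose]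
    simp
  obtain ⟨v, hv⟩ := exists_forall_dotProduct_mulVec_le hherm hθ
  obtain ⟨g, hg⟩ : ∃ g, g = Aᵀ *ᵥ f := ⟨_, rfl⟩
  have hgg : f ⬝ᵥ (A * Aᵀ) *ᵥ f = g ⬝ᵥ g := by
    rw [← Matrix.mulVec_mulVec, Matrix.dotProduct_mulVec, ← Matrix.mulVec_transpose, hg]
  have hAg : f ⬝ᵥ A *ᵥ g = g ⬝ᵥ g := by rw [← hgg, hg, Matrix.mulVec_mulVec]
  have hsg : ∑ b, g b = 0 := by
    simp only [hg, Matrix.mulVec, dotProduct, Matrix.transpose_apply]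
    rw [Finset.sum_comm]
    simp [← Finset.sum_mul, hrow, ← Finset.mul_sum, hf]
  rw [hgg]
  have hff0 : 0 ≤ f ⬝ᵥ f := Finset.sum_nonneg fun a _ => mul_self_nonneg (f a)
  have hgg0 : 0 ≤ g ⬝ᵥ g := Finset.sum_nonneg fun b _ => mul_self_nonneg (g b)
  rcases hgg0.eq_or_lt with h0 | hG
  · rw [← h0]; positivity
  have hF : 0 < f ⬝ᵥ f := by
    refine hff0.lt_of_ne fun h => hG.ne ?_
    rw [hg, dotProduct_self_eq_zero.1 h.symm]
    simp
  set G := g ⬝ᵥ g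
  set Φ := f ⬝ᵥ f
  have hV : Nonempty V := by
    by_contra h
    rw [not_nonempty_iff] at h
    simp [Φ] at hF
  obtain ⟨s, hs0, hs⟩ : ∃ s : ℝ, 0 < s ∧ s ^ 2 * Φ = G :=
    ⟨√(G / Φ), by positivity, by rw [Real.sq_sqrt (by positivity)]; field_simp⟩
  obtain ⟨x, hx⟩ : ∃ x : V ⊕ U → ℝ, x = Sum.elim (fun _ => √c) (fun _ => √d) := ⟨_, rfl⟩
  obtain ⟨y, hy⟩ : ∃ y : V ⊕ U → ℝ, y = Sum.elim (s • f) g := ⟨_, rfl⟩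
  obtain ⟨B, hB⟩ : ∃ B : Matrix (V ⊕ U) (V ⊕ U) ℝ, B = Matrix.fromBlocks 0 A Aᵀ 0 := ⟨_, rfl⟩
  have hBx : B *ᵥ x = (√c * √d) • x := by
    have hc2 := Real.mul_self_sqrt hc.le
    have hd2 := Real.mul_self_sqrt hd.le
    rw [hx, hB, Matrix.fromBlocks_mulVec]
    ext (a | b)
    · simp [Matrix.mulVec, dotProduct, ← Finset.sum_mul, hrow]
      linear_combination (-√d) * hc2
    · simp [Matrix.mulVec, dotProduct, ← Finset.sum_mul, hcol]
      linear_combination (-√c) * hd2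
  have hxy : x ⬝ᵥ y = 0 := by
    rw [hx, hy, sumElim_dotProduct_sumElim]
    simp [dotProduct, ← Finset.mul_sum, hf, hsg]
  have hxx : 0 < x ⬝ᵥ x := by
    rw [hx, sumElim_dotProduct_sumElim]
    simp only [dotProduct, Finset.sum_const, nsmul_eq_mul, Finset.card_univ]
    positivity
  have hyy : y ⬝ᵥ y = 2 * G := by
    rw [hy, sumElim_dotProduct_sumElim, smul_dotProduct, dotProduct_smul]
    simp only [smul_eq_mul]
    linear_combination hs
  have hyBy : y ⬝ᵥ B *ᵥ y = 2 * s * G := by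
    rw [hy, hB, Matrix.fromBlocks_mulVec, sumElim_dotProduct_sumElim]
    simp only [Sum.elim_comp_inl, Sum.elim_comp_inr, Matrix.zero_mulVec, zero_add, add_zero,
      smul_dotProduct, hAg, Matrix.mulVec_smul, smul_zero, ← hg, dotProduct_smul, smul_eq_mul]
    change s * G + s * G = _
    ring
  have hyBx : y ⬝ᵥ B *ᵥ x = 0 := by
    rw [hBx, dotProduct_smul, dotProduct_comm, hxy, smul_zero]
  have hxBy : x ⬝ᵥ B *ᵥ y = 0 := by
    have hBt : Bᵀ = B := by
      rw [hB, ← Matrix.conjTranspose_eq_transpose_of_trivial]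
      exact hherm
    rw [Matrix.dotProduct_mulVec, ← Matrix.mulVec_transpose, hBt, hBx, smul_dotProduct, hxy,
      smul_zero]
  obtain ⟨α, β, hαβ, hort⟩ : ∃ α β : ℝ, (α ≠ 0 ∨ β ≠ 0) ∧ v ⬝ᵥ (α • x + β • y) = 0 := by
    by_cases h : v ⬝ᵥ x = 0
    · exact ⟨1, 0, by simp, by simp [h]⟩
    · refine ⟨v ⬝ᵥ y, -(v ⬝ᵥ x), Or.inr (neg_ne_zero.2 h), ?_⟩
      simp only [dotProduct_add, dotProduct_smul, smul_eq_mul]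
      ring
  have key := hv _ hort
  rw [← hB] at key
  simp only [Matrix.mulVec_add, Matrix.mulVec_smul, dotProduct_add, add_dotProduct,
    dotProduct_smul, smul_dotProduct, smul_eq_mul, hyBx, hxBy, hyBy, hyy, hxy,
    dotProduct_comm y x] at key
  rw [hBx, dotProduct_smul, smul_eq_mul] at key
  have hsθ : s ≤ θ := by
    by_contra! h
    have h1 : 0 ≤ (√c * √d - θ) * (x ⬝ᵥ x) * α ^ 2 :=
      mul_nonneg (mul_nonneg (by linarith) hxx.le) (sq_nonneg α)
    have h2 : 0 ≤ (s - θ) * (2 * G) * β ^ 2 :=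
      mul_nonneg (mul_nonneg (by linarith) (by linarith)) (sq_nonneg β)
    rcases hαβ with h' | h'
    · have : 0 < (√c * √d - θ) * (x ⬝ᵥ x) * α ^ 2 :=
        mul_pos (mul_pos (by linarith) hxx) (by positivity)
      linarith
    · have : 0 < (s - θ) * (2 * G) * β ^ 2 :=
        mul_pos (mul_pos (by linarith) (by linarith)) (by positivity)
      linarith
  rw [← hs]
  gcongr
  exact hsθ.trans (le_max_left _ _)

lemma sub_mul_sum_nbWalks {V : Type*} [Fintype V] [DecidableEq V] {M : Matrix V V ℝ}
    {F : ℕ → Matrix V V ℝ} {w : ℕ → ℝ} {a e q u : ℝ}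
    (h0 : M * F 0 = F 1 + e • F 0 + u • 1)
    (hF : ∀ k, M * F (k + 1) = F (k + 2) + e • F (k + 1) + q • F k)
    (hw0 : w 0 = 0) (hw : ∀ k, w k + q * w (k + 2) = a * w (k + 1)) (j : ℕ) :
    M * ∑ k ∈ Finset.range (j + 1), w (k + 1) • F k
      = (e + a) • ∑ k ∈ Finset.range (j + 1), w (k + 1) • F k
        + (w 1 * u) • 1 + w (j + 1) • F (j + 1) - (q * w (j + 2)) • F j := by
  induction j with
  | zero =>
    have h := hw 0
    rw [hw0, zero_add, zero_add] at h
    simp only [zero_add, Finset.sum_range_one, Matrix.mul_smul, h0, h]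
    module
  | succ j ih =>
    have h : q * w (j + 1 + 2) = a * w (j + 2) - w (j + 1) := by linear_combination hw (j + 1)
    rw [Finset.sum_range_succ, Matrix.mul_add, ih, Matrix.mul_smul, hF, h]
    module

/-- Testing the quadratic form of `M` on a column of `∑ w (k + 1) • F k`, projected orthogonally to
the constants, bounds the number of vertices. -/
lemma sum_nbWalks_bound {V : Type*} [Fintype V] [DecidableEq V] [Nonempty V] {M : Matrix V V ℝ}
    {F : ℕ → Matrix V V ℝ} {w : ℕ → ℝ} {a c d τ : ℝ} (hc : 2 ≤ c) (hd : 2 ≤ d)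
    (hM : Mᵀ = M) (hM1 : ∀ b, ∑ a, M a b = c * d) (hnn : ∀ k a b, 0 ≤ F k a b)
    (hMF : M = F 0 + c • 1)
    (h0 : M * F 0 = F 1 + (c + d - 2) • F 0 + (c * (d - 1)) • 1)
    (hF : ∀ k, M * F (k + 1) = F (k + 2) + (c + d - 2) • F (k + 1) + ((c - 1) * (d - 1)) • F k)
    (hτ : ∀ f : V → ℝ, ∑ a, f a = 0 → f ⬝ᵥ M *ᵥ f ≤ τ * (f ⬝ᵥ f))
    (hw0 : w 0 = 0) (hw : ∀ k, w k + (c - 1) * (d - 1) * w (k + 2) = a * w (k + 1))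
    (j : ℕ) (hwj : w (j + 2) = 0) (hwn : ∀ k ≤ j + 1, 0 ≤ w k) (hab : τ ≤ c + d - 2 + a) :
    (c + d - 2 + a - τ) * (w 1 ^ 2 * (c * (d - 1))) * Fintype.card V ≤
      (∑ k ∈ Finset.range (j + 1), w (k + 1) * (c * (d - 1) * ((c - 1) * (d - 1)) ^ k)) ^ 2
        * (c * d - τ) := by
  obtain ⟨v⟩ := ‹Nonempty V›
  obtain ⟨Q, hQ⟩ : ∃ Q, Q = ∑ k ∈ Finset.range (j + 1), w (k + 1) • F k := ⟨_, rfl⟩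
  have hMQ := sub_mul_sum_nbWalks h0 hF hw0 hw j
  rw [← hQ, hwj, mul_zero, zero_smul, sub_zero] at hMQ
  obtain ⟨κ, hκ⟩ : ∃ κ, κ = ∑ k ∈ Finset.range (j + 1),
    w (k + 1) * (c * (d - 1) * ((c - 1) * (d - 1)) ^ k) := ⟨_, rfl⟩
  rw [← hκ]
  have hMone : M *ᵥ 1 = (c * d) • 1 := by
    rw [← hM]; ext b; simp [Matrix.mulVec, dotProduct, hM1]
  have honeM : 1 ᵥ* M = (c * d) • 1 := by rw [← Matrix.mulVec_transpose, hM, hMone]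
  have hone : ∀ k, (1 : V → ℝ) ᵥ* F k = (c * (d - 1) * ((c - 1) * (d - 1)) ^ k) • 1 := by
    have hz : (1 : V → ℝ) ᵥ* F 0 = (c * (d - 1) * ((c - 1) * (d - 1)) ^ 0) • 1 := by
      have : F 0 = M - c • 1 := by rw [hMF]; abel
      rw [this, Matrix.vecMul_sub, honeM, Matrix.vecMul_smul, Matrix.vecMul_one]
      module
    have hpair : ∀ k, (1 : V → ℝ) ᵥ* F k = (c * (d - 1) * ((c - 1) * (d - 1)) ^ k) • 1 ∧
        (1 : V → ℝ) ᵥ* F (k + 1) = (c * (d - 1) * ((c - 1) * (d - 1)) ^ (k + 1)) • 1 := by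
      intro k
      induction k with
      | zero =>
        refine ⟨hz, ?_⟩
        have : F 1 = M * F 0 - (c + d - 2) • F 0 - (c * (d - 1)) • 1 := by rw [h0]; abel
        rw [zero_add, this, Matrix.vecMul_sub, Matrix.vecMul_sub, ← Matrix.vecMul_vecMul, honeM]
        simp only [Matrix.vecMul_smul, Matrix.smul_vecMul, Matrix.vecMul_one, hz]
        module
      | succ k ih =>
        refine ⟨ih.2, ?_⟩
        have : F (k + 2) = M * F (k + 1) - (c + d - 2) • F (k + 1) - ((c - 1) * (d - 1)) • F k := by
          rw [hF]; abel
        rw [this, Matrix.vecMul_sub, Matrix.vecMul_sub, ← Matrix.vecMul_vecMul, honeM]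
        simp only [Matrix.vecMul_smul, Matrix.smul_vecMul, ih.1, ih.2]
        module
    exact fun k => (hpair k).1
  have hQone : (1 : V → ℝ) ᵥ* Q = κ • 1 := by
    rw [hQ, hκ, Matrix.vecMul_sum, Finset.sum_smul]
    refine Finset.sum_congr rfl fun k _ => ?_
    rw [Matrix.vecMul_smul, hone, smul_smul]
  have hQapply : ∀ a b, Q a b = ∑ k ∈ Finset.range (j + 1), w (k + 1) * F k a b := by
    intro a b
    simp [hQ, Matrix.sum_apply]
  have hterm : ∀ a b, ∀ k ∈ Finset.range (j + 1), 0 ≤ w (k + 1) * F k a b := fun a b k hk =>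
    mul_nonneg (hwn _ (by have := Finset.mem_range.1 hk; omega)) (hnn k a b)
  have hQF : ∀ a b, w 1 * F 0 a b ≤ Q a b := by
    intro a b
    rw [hQapply]
    exact Finset.single_le_sum (f := fun k => w (k + 1) * F k a b) (hterm a b) (by simp)
  have hw1 : 0 ≤ w 1 := hwn 1 (by omega)
  have hQnn : ∀ a b, 0 ≤ Q a b := fun a b => (mul_nonneg hw1 (hnn 0 a b)).trans (hQF a b)
  obtain ⟨f, hf⟩ : ∃ f : V → ℝ, f = Q.col v := ⟨_, rfl⟩
  have hfnn : ∀ a, 0 ≤ f a := fun a => by rw [hf]; exact hQnn a v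
  have hfsum : ∑ a, f a = κ := by
    have := congrFun hQone v
    simpa [Matrix.vecMul, dotProduct, hf] using this
  have hMf : ∀ x, (c + d - 2 + a) * f x ≤ (M *ᵥ f) x := by
    intro x
    have h := congrFun (congrFun hMQ x) v
    have h1 : (M *ᵥ f) x = (M * Q) x v := by rw [hf]; rfl
    have h2 : 0 ≤ w 1 * (c * (d - 1)) * (1 : Matrix V V ℝ) x v := by
      have : 0 ≤ c * (d - 1) := mul_nonneg (by linarith) (by linarith)
      rw [Matrix.one_apply]
      positivity
    have h3 := mul_nonneg (hwn (j + 1) le_rfl) (hnn (j + 1) x v)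
    have h4 : f x = Q x v := by rw [hf]; rfl
    simp only [Matrix.add_apply, Matrix.smul_apply, smul_eq_mul] at h
    rw [h1, h, h4]
    linarith
  have hfMf : (c + d - 2 + a) * (f ⬝ᵥ f) ≤ f ⬝ᵥ M *ᵥ f := by
    rw [dotProduct, Finset.mul_sum]
    refine Finset.sum_le_sum fun x _ => ?_
    nlinarith [mul_le_mul_of_nonneg_left (hMf x) (hfnn x)]
  have hff : w 1 ^ 2 * (c * (d - 1)) ≤ f ⬝ᵥ f := by
    have hF0 : F 0 = M - c • 1 := by rw [hMF]; abel
    have hsymm : (F 0)ᵀ = F 0 := by rw [hF0]; simp [hM]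
    have hsq : F 0 * F 0 = F 1 + (d - 2) • F 0 + (c * (d - 1)) • 1 := by
      nth_rewrite 1 [hF0]
      rw [Matrix.sub_mul, h0, Matrix.smul_mul, Matrix.one_mul]
      module
    have h1 : c * (d - 1) ≤ (F 0 * F 0) v v := by
      have h2 := hnn 1 v v
      have h3 := mul_nonneg (sub_nonneg.2 hd) (hnn 0 v v)
      rw [hsq]
      simp only [Matrix.add_apply, Matrix.smul_apply, smul_eq_mul, Matrix.one_apply_eq]
      linarith
    refine (mul_le_mul_of_nonneg_left h1 (sq_nonneg _)).trans ?_
    rw [Matrix.mul_apply, Finset.mul_sum, dotProduct]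
    refine Finset.sum_le_sum fun x _ => ?_
    have h2 : F 0 v x = F 0 x v := congrFun (congrFun hsymm x) v
    have h3 : w 1 * F 0 x v ≤ f x := by rw [hf]; exact hQF x v
    have h4 := mul_self_le_mul_self (mul_nonneg hw1 (hnn 0 x v)) h3
    rw [h2]
    linarith
  obtain ⟨m, hm⟩ : ∃ m : ℝ, m = Fintype.card V := ⟨_, rfl⟩
  have hm0 : 0 < m := by rw [hm]; exact_mod_cast Fintype.card_pos_iff.2 ⟨v⟩
  have hone1 : (1 : V → ℝ) ⬝ᵥ 1 = m := by simp [dotProduct, hm]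
  have hf1 : f ⬝ᵥ 1 = κ := by simp [dotProduct, hfsum]
  have h1f : 1 ⬝ᵥ f = κ := by rw [dotProduct_comm, hf1]
  have h1Mf : 1 ⬝ᵥ M *ᵥ f = c * d * κ := by
    rw [Matrix.dotProduct_mulVec, honeM, smul_dotProduct, h1f, smul_eq_mul]
  have hkey := hτ (f - (κ / m) • 1) (by
    simp only [Pi.sub_apply, Pi.smul_apply, Pi.one_apply, smul_eq_mul, mul_one,
      Finset.sum_sub_distrib, hfsum, Finset.sum_const, Finset.card_univ, nsmul_eq_mul, ← hm]
    field_simp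
    ring)
  simp only [Matrix.mulVec_sub, Matrix.mulVec_smul, dotProduct_sub, sub_dotProduct,
    dotProduct_smul, smul_dotProduct, smul_eq_mul, hMone, hone1, hf1, h1f, h1Mf] at hkey
  have hbound : (c + d - 2 + a - τ) * (f ⬝ᵥ f) ≤ κ ^ 2 / m * (c * d - τ) := by
    obtain ⟨t, ht⟩ : ∃ t, t = κ / m := ⟨_, rfl⟩
    have hκt : κ = t * m := by rw [ht]; field_simp
    rw [← ht, hκt] at hkey
    have : κ ^ 2 / m = t ^ 2 * m := by rw [hκt]; field_simp
    rw [this]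
    linarith
  rw [← hm, ← le_div_iff₀ hm0]
  calc _ ≤ (c + d - 2 + a - τ) * (f ⬝ᵥ f) := mul_le_mul_of_nonneg_left hff (by linarith)
    _ ≤ _ := hbound
    _ = _ := by ring

lemma sqrt_sub_one_add_sqrt_sub_one_le {c d : ℝ} (hc : 1 ≤ c) (hd : 1 ≤ d) :
    √(c - 1) + √(d - 1) ≤ √c * √d := by
  have hx := Real.sq_sqrt (sub_nonneg.2 hc)
  have hy := Real.sq_sqrt (sub_nonneg.2 hd)
  rw [← Real.sqrt_mul (by linarith)]
  refine Real.le_sqrt_of_sq_le ?_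
  have h : c * d = (√(c - 1) ^ 2 + 1) * (√(d - 1) ^ 2 + 1) := by rw [hx, hy]; ring
  rw [h]
  nlinarith [sq_nonneg (√(c - 1) * √(d - 1) - 1)]

/-- **Feng–Li (Alon–Boppana for biregular bipartite graphs).**
Let `G₁, G₂, …` be a sequence of `(c,d)`-biregular bipartite graphs — given by 0–1
biadjacency matrices `A i` of size `m i × n i` with constant row sums `c` and constant
column sums `d` — whose numbers of vertices `m i + n i` tend to infinity.  If the second
largest eigenvalue of the adjacency matrix `Bᵢ = [[0, Aᵢ],[Aᵢᵀ, 0]]` is at most `θ` for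
every `i`, then `θ ≥ √(c−1) + √(d−1)`. -/
theorem feng_li
    (c d : ℕ) (hc : 2 ≤ c) (hd : 2 ≤ d) (θ : ℝ)
    (m n : ℕ → ℕ)
    (A : ∀ i : ℕ, Matrix (Fin (m i)) (Fin (n i)) ℝ)
    (h01 : ∀ i a b, A i a b = 0 ∨ A i a b = 1)
    (hrow : ∀ i a, ∑ b, A i a b = c)
    (hcol : ∀ i b, ∑ a, A i a b = d)
    (hgrow : Tendsto (fun i => m i + n i) atTop atTop)
    (hθ : ∀ i, nthLargestEig
      (Matrix.fromBlocks 0 (A i) (A i)ᵀ 0) 2 ≤ θ) :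
    Real.sqrt ((c : ℝ) - 1) + Real.sqrt ((d : ℝ) - 1) ≤ θ := by
  by_contra! hlt
  have hc' : (2 : ℝ) ≤ c := by exact_mod_cast hc
  have hd' : (2 : ℝ) ≤ d := by exact_mod_cast hd
  have hx := Real.sq_sqrt (show (0 : ℝ) ≤ c - 1 by linarith)
  have hy := Real.sq_sqrt (show (0 : ℝ) ≤ d - 1 by linarith)
  have hx0 : 0 < √((c : ℝ) - 1) := Real.sqrt_pos.2 (by linarith)
  have hy0 : 0 < √((d : ℝ) - 1) := Real.sqrt_pos.2 (by linarith)
  have hθcd : θ < √(c : ℝ) * √(d : ℝ) :=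
    hlt.trans_le (sqrt_sub_one_add_sqrt_sub_one_le (by linarith) (by linarith))
  obtain ⟨q, hq⟩ : ∃ q, q = √((c : ℝ) - 1) * √((d : ℝ) - 1) := ⟨_, rfl⟩
  have hq0 : 0 < q := by rw [hq]; positivity
  have hq2 : ((c : ℝ) - 1) * (d - 1) = q ^ 2 := by rw [hq, mul_pow, hx, hy]
  obtain ⟨τ, hτ⟩ : ∃ τ, τ = max θ 0 ^ 2 := ⟨_, rfl⟩
  have hτlt : τ < (c : ℝ) + d - 2 + 2 * q * 1 := by
    have h1 : max θ 0 < √((c : ℝ) - 1) + √((d : ℝ) - 1) := max_lt hlt (by positivity)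
    have h2 := pow_lt_pow_left₀ h1 (le_max_right _ _) two_ne_zero
    rw [hτ]
    refine h2.trans_eq ?_
    rw [hq]
    linear_combination hx + hy
  obtain ⟨j, hj⟩ : ∃ j : ℕ, τ < (c : ℝ) + d - 2 + 2 * q * Real.cos (Real.pi / ((j : ℝ) + 2)) := by
    have h1 : Tendsto (fun j : ℕ => Real.pi / ((j : ℝ) + 2)) atTop (nhds 0) :=
      tendsto_const_nhds.div_atTop
        (tendsto_atTop_add_const_right _ _ tendsto_natCast_atTop_atTop)
    have h2 := (Real.continuous_cos.tendsto 0).comp h1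
    rw [Real.cos_zero] at h2
    have h3 := (h2.const_mul (2 * q)).const_add ((c : ℝ) + d - 2)
    exact (h3.eventually (lt_mem_nhds hτlt)).exists
  obtain ⟨φ, hφ⟩ : ∃ φ, φ = Real.pi / ((j : ℝ) + 2) := ⟨_, rfl⟩
  have hφ0 : 0 < φ := by rw [hφ]; positivity
  have hφπ : ((j : ℝ) + 2) * φ = Real.pi := by rw [hφ]; field_simp
  rw [← hφ] at hj
  obtain ⟨w, hw⟩ : ∃ w : ℕ → ℝ, ∀ k, w k = Real.sin (k * φ) / q ^ k := ⟨_, fun _ => rfl⟩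
  have hw0 : w 0 = 0 := by simp [hw]
  have hwj : w (j + 2) = 0 := by simp [hw, hφπ]
  have hwn : ∀ k ≤ j + 1, 0 ≤ w k := by
    intro k hk
    rw [hw]
    have hk' : (k : ℝ) ≤ j + 1 := by exact_mod_cast hk
    refine div_nonneg (Real.sin_nonneg_of_nonneg_of_le_pi (by positivity) ?_) (by positivity)
    rw [← hφπ]
    gcongr
    linarith
  have hw1 : 0 < w 1 := by
    rw [hw]
    refine div_pos (Real.sin_pos_of_pos_of_lt_pi (by simpa) ?_) (by positivity)
    rw [← hφπ, Nat.cast_one]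
    gcongr
    linarith [(Nat.cast_nonneg j : (0 : ℝ) ≤ j)]
  have hwrec : ∀ k, w k + ((c : ℝ) - 1) * (d - 1) * w (k + 2) = 2 * q * Real.cos φ * w (k + 1) := by
    intro k
    have h1 : ((k + 2 : ℕ) : ℝ) * φ = ((k + 1 : ℕ) : ℝ) * φ + φ := by push_cast; ring
    have h2 : (k : ℝ) * φ = ((k + 1 : ℕ) : ℝ) * φ - φ := by push_cast; ring
    rw [hq2, hw, hw, hw, h1, h2, Real.sin_add, Real.sin_sub]
    field_simp
    ring
  obtain ⟨C, hC⟩ : ∃ C, C = (∑ k ∈ Finset.range (j + 1), w (k + 1) *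
      ((c : ℝ) * (d - 1) * (((c : ℝ) - 1) * (d - 1)) ^ k)) ^ 2 * (c * d - τ) := ⟨_, rfl⟩
  obtain ⟨δ, hδ⟩ : ∃ δ, δ = ((c : ℝ) + d - 2 + 2 * q * Real.cos φ - τ) *
    (w 1 ^ 2 * (c * (d - 1))) := ⟨_, rfl⟩
  have hδ0 : 0 < δ := by
    rw [hδ]
    have h1 : (0 : ℝ) < d - 1 := by linarith
    have h2 : (0 : ℝ) < c := by linarith
    exact mul_pos (by linarith) (by positivity)
  have hnm : ∀ i, n i ≤ m i * c := by
    intro i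
    have h : (n i : ℝ) * d = m i * c := by
      have := Finset.sum_comm (s := Finset.univ) (t := Finset.univ) (f := fun a b => A i a b)
      simpa [hrow, hcol] using this.symm
    have h' : n i * d = m i * c := by exact_mod_cast h
    nlinarith
  have hbound : ∀ i, 0 < m i → δ * m i ≤ C := by
    intro i hi
    have : Nonempty (Fin (m i)) := ⟨⟨0, hi⟩⟩
    obtain ⟨F, hnn, hMF, hF0, hF⟩ := exists_nbWalks (h01 i) (hrow i) (hcol i)
    have := sum_nbWalks_bound (M := A i * (A i)ᵀ) (τ := τ) hc' hd' (by simp) (fun b => by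
      simp only [Matrix.mul_apply, Matrix.transpose_apply]
      rw [Finset.sum_comm]
      simp only [← Finset.sum_mul, hcol, ← Finset.mul_sum, hrow]
      ring) hnn hMF hF0 hF (fun f hf => by
        rw [hτ]
        exact dotProduct_mul_transpose_mulVec_le (by linarith) (by linarith) (hrow i) (hcol i)
          (hθ i) hθcd hf) hw0 hwrec j hwj hwn hj.le
    rwa [Fintype.card_fin, ← hC, ← hδ] at this
  obtain ⟨K, hK⟩ := exists_nat_gt (C / δ)
  obtain ⟨i, hi⟩ := (hgrow.eventually (eventually_gt_atTop (K * (1 + c)))).exists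
  have hmK : K < m i := by
    by_contra! h
    have := hnm i
    nlinarith
  have h1 := hbound i (by omega)
  rw [div_lt_iff₀ hδ0] at hK
  have h2 : (K : ℝ) < m i := by exact_mod_cast hmK
  nlinarith
end
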